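/- arXiv:1908.08910 — 2 statements merged into one kernel-verified Lean document; each statement's English description precedes it below -/
import Mathlib

section
/- The number of pop-stacked permutations of length n for n = 1, 2, ..., 10 is 1, 1, 3, 11, 49, 263, 1653, 11877, 95991, 862047, respectively. -/
/-- The maximal descending runs of a list, in order. -/
def descRuns : List ℕ → List (List ℕ)
  | [] => []
  | a :: l =>
    match descRuns l with
    | (b :: r) :: rs => if b < a then (a :: b :: r) :: rs else [a] :: (b :: r) :: rs
    | _ => [[a]]

/-- The maximal ascending runs of a list, in order. -/
def ascRuns : List ℕ → List (List ℕ)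
  | [] => []
  | a :: l =>
    match ascRuns l with
    | (b :: r) :: rs => if a < b then (a :: b :: r) :: rs else [a] :: (b :: r) :: rs
    | _ => [[a]]

/-- The pop-stack operator: reverse each maximal descending run. -/
def popStack (l : List ℕ) : List ℕ := ((descRuns l).map List.reverse).flatten

/-- `l` is (the one-line notation of) a permutation of `[n] = {1,…,n}`. -/
def IsPermOf (n : ℕ) (l : List ℕ) : Prop := l.Perm (List.range' 1 n)

/-- Minimum of a list of naturals. -/
noncomputable def lmin (l : List ℕ) : ℕ := sInf {x | x ∈ l}

/-- Maximum of a list of naturals. -/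
def lmax (l : List ℕ) : ℕ := l.foldr max 0

/-- Minimum of a finset of naturals. -/
noncomputable def bmin (B : Finset ℕ) : ℕ := sInf (B : Set ℕ)

/-- Maximum of a finset of naturals. -/
def bmax (B : Finset ℕ) : ℕ := B.sup id

/-- A ballot (ordered set partition) with underlying set `U`. -/
def IsBallot (U : Finset ℕ) (l : List (Finset ℕ)) : Prop :=
  (∀ B ∈ l, B.Nonempty) ∧ l.Pairwise Disjoint ∧ l.foldr (· ∪ ·) ∅ = U

/-- A ballot is overlapping if adjacent blocks satisfy
`max Bᵢ > min Bᵢ₊₁` and `min Bᵢ < max Bᵢ₊₁`. -/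
def Overlapping (l : List (Finset ℕ)) : Prop :=
  l.Chain' fun B C => bmin C < bmax B ∧ bmin B < bmax C

/-- `σ` is pop-stacked: it is the image of some permutation of `[n]` under `popStack`. -/
def IsPopStacked (n : ℕ) (σ : List ℕ) : Prop :=
  ∃ π, IsPermOf n π ∧ popStack π = σ

/-- `f_{c,d}(n)`: overlapping ballots of `[n]` whose last block has min `c` and max `d`. -/
noncomputable def fcd (c d n : ℕ) : ℕ :=
  Nat.card {l : List (Finset ℕ) // IsBallot (Finset.Icc 1 n) l ∧ Overlapping l ∧
    ∃ B, l.getLast? = some B ∧ bmin B = c ∧ bmax B = d}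

/-- `f_{c,d}(n,k)`: overlapping ballots of `[n]` with `k` blocks whose last block has
min `c` and max `d`. -/
noncomputable def fcdk (c d n k : ℕ) : ℕ :=
  Nat.card {l : List (Finset ℕ) // IsBallot (Finset.Icc 1 n) l ∧ Overlapping l ∧
    l.length = k ∧ ∃ B, l.getLast? = some B ∧ bmin B = c ∧ bmax B = d}

/-- The number of pop-stacked permutations of `[n]`. -/
noncomputable def popCount (n : ℕ) : ℕ :=
  Nat.card {σ : List ℕ // IsPermOf n σ ∧ IsPopStacked n σ}

/-- The number of pop-stacked permutations of `[n]` with exactly `k` ascending runs. -/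
noncomputable def popCountK (n k : ℕ) : ℕ :=
  Nat.card {σ : List ℕ // IsPermOf n σ ∧ IsPopStacked n σ ∧ (ascRuns σ).length = k}

/-- Greedy sorting with a pop-stack whose contents increase from top to bottom:
push when possible, otherwise pop the whole stack. -/
def greedyPop : List ℕ → List ℕ → List ℕ
  | stack, [] => stack
  | [], a :: rest => greedyPop [a] rest
  | t :: s, a :: rest =>
    if a < t then greedyPop (a :: t :: s) rest
    else (t :: s) ++ greedyPop [a] rest

/-- `PopAdmissible p m c l`: the list `l` may follow a prefix whose last entry is `c`, whose last
ascending run starts with `m`, and whose previous ascending run starts with `p`, in such a way that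
each ascending run from this point on ends with an entry at least as large as the first entry of
the run before it. -/
def PopAdmissible : ℕ → ℕ → ℕ → List ℕ → Prop
  | p, _, c, [] => p ≤ c
  | p, m, c, x :: l =>
    if c < x then PopAdmissible p m x l else p ≤ c ∧ PopAdmissible m x x l

/-- `L` is a list of nonempty increasing blocks such that the last entry of each block is at least
the first entry of the preceding block, where `p` is the first entry of the block before `L`. -/
def OverlapBlocks : ℕ → List (List ℕ) → Prop
  | _, [] => True
  | _, [] :: _ => False
  | p, (a :: r) :: L =>
    (a :: r).IsChain (· < ·) ∧ p ≤ (a :: r).getLast (List.cons_ne_nil a r) ∧ OverlapBlocks a L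

theorem PopAdmissible.mono {p p' m m' c : ℕ} {l : List ℕ} (h : PopAdmissible p m c l)
    (hp : p' ≤ p) (hm : m' ≤ m) : PopAdmissible p' m' c l := by
  induction l generalizing p p' m m' c with
  | nil => exact hp.trans h
  | cons x l ih =>
    unfold PopAdmissible at h ⊢
    split_ifs at h ⊢ with hx
    · exact ih h hp hm
    · exact ⟨hp.trans h.1, ih h.2 hm le_rfl⟩

theorem List.IsChain.head_le_getLast_of_lt {c : ℕ} {r : List ℕ} (h : (c :: r).IsChain (· < ·)) :
    c ≤ (c :: r).getLast (List.cons_ne_nil c r) := by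
  induction r generalizing c with
  | nil => simp
  | cons x r ih =>
    rw [List.isChain_cons_cons] at h
    rw [List.getLast_cons_cons]
    exact h.1.le.trans (ih h.2)

theorem PopAdmissible.exists_blocks {p m c : ℕ} {l : List ℕ} (h : PopAdmissible p m c l) :
    ∃ r L, l = r ++ L.flatten ∧ (c :: r).IsChain (· < ·) ∧
      p ≤ (c :: r).getLast (List.cons_ne_nil c r) ∧ OverlapBlocks m L := by
  induction l generalizing p m c with
  | nil => exact ⟨[], [], by simp, by simp, by simpa [PopAdmissible] using h, trivial⟩
  | cons x l ih =>
    unfold PopAdmissible at h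
    split_ifs at h with hx
    · obtain ⟨r, L, rfl, hr, hp, hL⟩ := ih h
      exact ⟨x :: r, L, by simp, List.isChain_cons_cons.2 ⟨hx, hr⟩, by simpa using hp, hL⟩
    · obtain ⟨r, L, rfl, hr, hp, hL⟩ := ih h.2
      exact ⟨[], (x :: r) :: L, by simp, by simp, by simpa using h.1, hr, hp, hL⟩

theorem PopAdmissible.append {p m c : ℕ} {r l : List ℕ} (hr : (c :: r).IsChain (· < ·))
    (h : PopAdmissible p m ((c :: r).getLast (List.cons_ne_nil c r)) l) :
    PopAdmissible p m c (r ++ l) := by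
  induction r generalizing c with
  | nil => simpa using h
  | cons x r ih =>
    rw [List.isChain_cons_cons] at hr
    simp only [List.cons_append, PopAdmissible, if_pos hr.1]
    exact ih hr.2 (by simpa using h)

theorem OverlapBlocks.popAdmissible {L : List (List ℕ)} {p m c : ℕ}
    (hL : OverlapBlocks m L) (hmc : m ≤ c) (hp : p ≤ c) : PopAdmissible p m c L.flatten := by
  induction L generalizing p m c with
  | nil => exact hp
  | cons B L ih =>
    match B, hL with
    | x :: s, ⟨hs, hm, hL⟩ =>
      have hx := hs.head_le_getLast_of_lt
      simp only [List.flatten_cons, List.cons_append, PopAdmissible]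
      split_ifs with hcx
      · exact (PopAdmissible.append hs (ih hL hx (hp.trans (hcx.le.trans hx)))).mono le_rfl
          (hmc.trans hcx.le)
      · exact ⟨hp, PopAdmissible.append hs (ih hL hx hm)⟩

theorem exists_overlapBlocks_iff {n : ℕ} {l : List ℕ} (hl : ∀ x ∈ l, x ≤ n) :
    (∃ L, OverlapBlocks 0 L ∧ L.flatten = l) ↔ PopAdmissible 0 0 (n + 1) l := by
  constructor
  · rintro ⟨L, hL, rfl⟩
    exact hL.popAdmissible (Nat.zero_le _) (Nat.zero_le _)
  · intro h
    obtain ⟨r, L, rfl, hr, -, hL⟩ := h.exists_blocks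
    match r with
    | [] => exact ⟨L, hL, by simp⟩
    | x :: r =>
      have h1 := (List.isChain_cons_cons.1 hr).1
      have h2 := hl x (by simp)
      omega

/-- `L` is a list of nonempty decreasing blocks in which the last entry of each block is at most
the first entry of the next one. -/
def IsDescBlocks (L : List (List ℕ)) : Prop :=
  (∀ B ∈ L, B ≠ [] ∧ B.IsChain (· > ·)) ∧ L.IsChain fun B C => B.getLastD 0 ≤ C.headD 0

theorem isDescBlocks_cons {B : List ℕ} {L : List (List ℕ)} :
    IsDescBlocks (B :: L) ↔ (B ≠ [] ∧ B.IsChain (· > ·)) ∧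
      (∀ C ∈ L.head?, B.getLastD 0 ≤ C.headD 0) ∧ IsDescBlocks L := by
  simp only [IsDescBlocks, List.forall_mem_cons, List.isChain_cons]
  tauto

theorem flatten_descRuns_and_isDescBlocks (l : List ℕ) :
    (descRuns l).flatten = l ∧ IsDescBlocks (descRuns l) := by
  induction l with
  | nil => simp [descRuns, IsDescBlocks]
  | cons a l ih =>
    unfold descRuns
    split
    next b r rs h =>
      rw [h, isDescBlocks_cons] at ih
      obtain ⟨h1, h2, h3, h4⟩ := ih
      split_ifs with hb
      · refine ⟨by simp [← h1], isDescBlocks_cons.2 ⟨⟨by simp, ?_⟩, ?_, h4⟩⟩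
        · exact List.isChain_cons_cons.2 ⟨hb, h2.2⟩
        · simpa using h3
      · refine ⟨by simp [← h1], isDescBlocks_cons.2 ⟨by simp, ?_, isDescBlocks_cons.2 ⟨h2, h3, h4⟩⟩⟩
        simpa using hb
    next h =>
      match hd : descRuns l with
      | [] =>
        rw [hd] at ih
        simp [← ih.1, IsDescBlocks]
      | [] :: rs =>
        rw [hd] at ih
        simp [isDescBlocks_cons] at ih
      | (b :: r) :: rs => exact absurd hd (h b r rs)

theorem descRuns_append {B l : List ℕ} (hB : B ≠ []) (hc : B.IsChain (· > ·))
    (h : IsDescBlocks (descRuns l)) (hl : ∀ C ∈ (descRuns l).head?, B.getLastD 0 ≤ C.headD 0) :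
    descRuns (B ++ l) = B :: descRuns l := by
  induction B with
  | nil => contradiction
  | cons b r ih =>
    cases r with
    | nil =>
      simp only [List.cons_append, List.nil_append]
      rw [descRuns]
      split
      next c s rs hd =>
        rw [if_neg (by simpa [hd] using hl), hd]
      next hd =>
        match hd' : descRuns l with
        | [] => rfl
        | [] :: rs =>
          rw [hd'] at h
          simp [isDescBlocks_cons] at h
        | (c :: s) :: rs => exact absurd hd' (hd c s rs)
    | cons c s =>
      rw [List.isChain_cons_cons] at hc
      rw [List.cons_append, descRuns, ih (by simp) hc.2 (by simpa using hl)]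
      exact if_pos hc.1

theorem descRuns_flatten {L : List (List ℕ)} (h : IsDescBlocks L) : descRuns L.flatten = L := by
  induction L with
  | nil => rfl
  | cons B L ih =>
    obtain ⟨⟨h1, h2⟩, h3, h4⟩ := isDescBlocks_cons.1 h
    have hL := ih h4
    rw [List.flatten_cons, descRuns_append h1 h2 (by rwa [hL]) (by rwa [hL]), hL]

theorem overlapBlocks_iff {p : ℕ} {L : List (List ℕ)} :
    OverlapBlocks p L ↔
      (∀ B ∈ L.head?, p ≤ B.getLastD 0) ∧ IsDescBlocks (L.map List.reverse) := by
  induction L generalizing p with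
  | nil => simp [OverlapBlocks, IsDescBlocks]
  | cons B L ih =>
    cases B with
    | nil => simp [OverlapBlocks, isDescBlocks_cons]
    | cons a r =>
      have h1 : (a :: r).reverse.IsChain (· > ·) ↔ (a :: r).IsChain (· < ·) :=
        List.isChain_reverse
      rw [List.map_cons, isDescBlocks_cons, OverlapBlocks, ih, h1]
      have h2 : (∀ C ∈ (L.map List.reverse).head?, (a :: r).reverse.getLastD 0 ≤ C.headD 0) ↔
          ∀ B ∈ L.head?, a ≤ B.getLastD 0 := by
        cases L <;> simp
      rw [h2]
      simp [List.getLastD_eq_getLast?, List.getLast?_eq_some_getLast]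
      tauto

theorem exists_popStack_iff {n : ℕ} {l : List ℕ} (hl : ∀ x ∈ l, x ≤ n) :
    (∃ t, popStack t = l) ↔ PopAdmissible 0 0 (n + 1) l := by
  rw [← exists_overlapBlocks_iff hl]
  constructor
  · rintro ⟨t, rfl⟩
    refine ⟨(descRuns t).map List.reverse, overlapBlocks_iff.2 ⟨by simp, ?_⟩, rfl⟩
    simpa using (flatten_descRuns_and_isDescBlocks t).2
  · rintro ⟨L, hL, rfl⟩
    refine ⟨(L.map List.reverse).flatten, ?_⟩
    rw [popStack, descRuns_flatten (overlapBlocks_iff.1 hL).2]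
    simp

theorem popStack_perm (t : List ℕ) : (popStack t).Perm t := by
  conv_rhs => rw [← (flatten_descRuns_and_isDescBlocks t).1]
  unfold popStack
  induction descRuns t with
  | nil => exact .refl _
  | cons B L ih => exact (List.reverse_perm B).append ih

theorem isPopStacked_iff {n : ℕ} {l : List ℕ} (hl : IsPermOf n l) :
    IsPopStacked n l ↔ PopAdmissible 0 0 (n + 1) l := by
  rw [← exists_popStack_iff fun x hx => by
    have := hl.mem_iff.1 hx
    rw [List.mem_range'_1] at this
    omega]
  constructor
  · rintro ⟨t, -, ht⟩
    exact ⟨t, ht⟩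
  · rintro ⟨t, rfl⟩
    exact ⟨t, (popStack_perm t).symm.trans hl, rfl⟩

/-- The lists arranging an `n`-element set `S` that are `PopAdmissible p m c`. -/
def admissibleLists : ℕ → Finset ℕ → ℕ → ℕ → ℕ → Finset (List ℕ)
  | 0, _, p, _, c => if p ≤ c then {[]} else ∅
  | n + 1, S, p, m, c => S.biUnion fun x =>
    (if c < x then admissibleLists n (S.erase x) p m x
      else if p ≤ c then admissibleLists n (S.erase x) m x x else ∅).map
        ⟨List.cons x, List.cons_injective⟩

theorem mem_admissibleLists {n : ℕ} {S : Finset ℕ} (hS : S.card = n) {p m c : ℕ} {l : List ℕ} :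
    l ∈ admissibleLists n S p m c ↔ l.Perm S.toList ∧ PopAdmissible p m c l := by
  induction n generalizing S p m c l with
  | zero =>
    obtain rfl := Finset.card_eq_zero.1 hS
    unfold admissibleLists
    split_ifs with h
    · simp only [Finset.mem_singleton, Finset.toList_empty, List.perm_nil]
      constructor
      · rintro rfl
        exact ⟨rfl, h⟩
      · exact And.left
    · simp only [Finset.notMem_empty, Finset.toList_empty, List.perm_nil, false_iff, not_and]
      rintro rfl
      exact h
  | succ n ih =>
    cases l with
    | nil =>
      have : S ≠ ∅ := by
        rintro rfl
        simp at hS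
      simp [admissibleLists, this]
    | cons x l =>
      have h1 : (x :: l).Perm S.toList ↔ x ∈ S ∧ l.Perm (S.erase x).toList := by
        rw [List.cons_perm_iff_perm_erase, Finset.mem_toList]
        refine and_congr_right fun hx => ?_
        have : (S.toList.erase x).Perm (S.erase x).toList := by
          rw [← Multiset.coe_eq_coe, ← Multiset.coe_erase]
          simp
        exact ⟨fun h => h.trans this, fun h => h.trans this.symm⟩
      rw [h1, and_assoc, PopAdmissible]
      simp only [admissibleLists, Finset.mem_biUnion, Finset.mem_map,
        Function.Embedding.coeFn_mk, List.cons.injEq]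
      have h2 : ∀ x ∈ S, (S.erase x).card = n := fun x hx => by
        rw [Finset.card_erase_of_mem hx, hS, Nat.add_sub_cancel]
      constructor
      · rintro ⟨y, hy, t, ht, rfl, rfl⟩
        split_ifs at ht ⊢ with h3 h4
        · exact ⟨hy, (ih (h2 _ hy)).1 ht⟩
        · have := (ih (h2 _ hy)).1 ht
          exact ⟨hy, this.1, h4, this.2⟩
        · simp at ht
      · rintro ⟨hx, h3, h4⟩
        refine ⟨x, hx, l, ?_, rfl, rfl⟩
        split_ifs at h4 ⊢ with h5 h6
        · exact (ih (h2 _ hx)).2 ⟨h3, h4⟩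
        · exact (ih (h2 _ hx)).2 ⟨h3, h4.2⟩
        · exact absurd h4.1 h6

theorem card_admissibleLists_succ (n : ℕ) (S : Finset ℕ) (p m c : ℕ) :
    (admissibleLists (n + 1) S p m c).card = ∑ x ∈ S,
      if c < x then (admissibleLists n (S.erase x) p m x).card
      else if p ≤ c then (admissibleLists n (S.erase x) m x x).card else 0 := by
  rw [admissibleLists, Finset.card_biUnion]
  · refine Finset.sum_congr rfl fun x _ => ?_
    rw [Finset.card_map]
    split_ifs <;> simp
  · intro x _ y _ hxy
    rw [Function.onFun, Finset.disjoint_left]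
    simp only [Finset.mem_map, Function.Embedding.coeFn_mk]
    rintro l ⟨t, -, rfl⟩ ⟨t', -, h⟩
    exact hxy (List.cons.inj h).1.symm

theorem popCount_eq_card (n : ℕ) :
    popCount n = (admissibleLists n (Finset.Icc 1 n) 0 0 (n + 1)).card := by
  refine Nat.subtype_card _ fun l => ?_
  have h : l.Perm (Finset.Icc 1 n).toList ↔ IsPermOf n l := by
    have : (Finset.Icc 1 n).toList.Perm (List.range' 1 n) := by
      rw [List.perm_ext_iff_of_nodup (Finset.nodup_toList _) List.nodup_range']
      intro x
      rw [Finset.mem_toList, Finset.mem_Icc, List.mem_range'_1]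
      omega
    exact ⟨fun h => h.trans this, fun h => h.trans this.symm⟩
  rw [mem_admissibleLists (by simp), h]
  exact and_congr_right fun hl => (isPopStacked_iff hl).symm

/-- The number of elements of `S` below `y`. -/
def belowCard (S : Finset ℕ) (y : ℕ) : ℕ := (S.filter (· < y)).card

theorem belowCard_le_card (S : Finset ℕ) (y : ℕ) : belowCard S y ≤ S.card :=
  Finset.card_filter_le _ _

theorem belowCard_mono (S : Finset ℕ) {y z : ℕ} (h : y ≤ z) : belowCard S y ≤ belowCard S z :=
  Finset.card_le_card fun _ hx => by
    rw [Finset.mem_filter] at hx ⊢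
    exact ⟨hx.1, hx.2.trans_le h⟩

theorem belowCard_lt_of_mem {S : Finset ℕ} {y z : ℕ} (hy : y ∈ S) (h : y < z) :
    belowCard S y < belowCard S z := by
  refine Finset.card_lt_card (Finset.ssubset_iff_of_subset ?_ |>.2 ⟨y, ?_, ?_⟩)
  · intro x hx
    rw [Finset.mem_filter] at hx ⊢
    exact ⟨hx.1, hx.2.trans h⟩
  · simp [hy, h]
  · simp

theorem belowCard_le_iff {S : Finset ℕ} {y z : ℕ} (hy : y ∈ S) :
    belowCard S z ≤ belowCard S y ↔ z ≤ y :=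
  ⟨fun h => not_lt.1 fun h' => (belowCard_lt_of_mem hy h').not_ge h, belowCard_mono S⟩

theorem belowCard_erase_of_le {S : Finset ℕ} {x y : ℕ} (h : y ≤ x) :
    belowCard (S.erase x) y = belowCard S y := by
  unfold belowCard
  congr 1
  ext z
  simp only [Finset.mem_filter, Finset.mem_erase]
  constructor
  · exact fun hz => ⟨hz.1.2, hz.2⟩
  · exact fun hz => ⟨⟨by omega, hz.1⟩, hz.2⟩

theorem belowCard_erase_of_lt {S : Finset ℕ} {x y : ℕ} (hx : x ∈ S) (h : x < y) :
    belowCard (S.erase x) y = belowCard S y - 1 := by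
  unfold belowCard
  rw [Finset.filter_erase, Finset.card_erase_of_mem (by simp [hx, h])]

theorem sum_belowCard (S : Finset ℕ) (f : ℕ → ℕ) :
    ∑ x ∈ S, f (belowCard S x) = ∑ r ∈ Finset.range S.card, f r := by
  have hinj : Set.InjOn (belowCard S) S := fun x hx y hy h =>
    le_antisymm ((belowCard_le_iff hy).1 h.le) ((belowCard_le_iff hx).1 h.ge)
  have himage : S.image (belowCard S) = Finset.range S.card := by
    refine Finset.eq_of_subset_of_card_le ?_ ?_
    · intro r hr
      obtain ⟨x, hx, rfl⟩ := Finset.mem_image.1 hr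
      rw [Finset.mem_range]
      exact Finset.card_lt_card (Finset.filter_ssubset.2 ⟨x, hx, lt_irrefl x⟩)
    · rw [Finset.card_image_of_injOn hinj, Finset.card_range]
  rw [← himage, Finset.sum_image hinj]

/-- The cardinalities of `admissibleLists n S p m c` in terms of the numbers of elements of `S`
below `m` and `c` when `p ≤ c` (first component), and in terms of the numbers of elements of `S`
below `p`, `m` and `c` when `c < p` (second component). -/
def admissibleCount : ℕ → (ℕ → ℕ → ℕ) × (ℕ → ℕ → ℕ → ℕ)
  | 0 => (fun _ _ => 1, fun _ _ _ => 0)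
  | n + 1 =>
    (fun m c => ∑ r ∈ Finset.range (n + 1),
      if c ≤ r then (admissibleCount n).1 m r
      else if m ≤ r then (admissibleCount n).1 r r else (admissibleCount n).2 (m - 1) r r,
    fun p m c => ∑ r ∈ Finset.range (n + 1),
      if c ≤ r then
        if p ≤ r then (admissibleCount n).1 m r else (admissibleCount n).2 (p - 1) m r
      else 0)

theorem card_admissibleLists {n : ℕ} {S : Finset ℕ} (hS : S.card = n) {p m c : ℕ} (hmc : m ≤ c)
    (hp : p ∉ S) (hm : m ∉ S) (hc : c ∉ S) :
    (admissibleLists n S p m c).card =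
      if p ≤ c then (admissibleCount n).1 (belowCard S m) (belowCard S c)
      else (admissibleCount n).2 (belowCard S p) (belowCard S m) (belowCard S c) := by
  induction n generalizing S p m c with
  | zero =>
    unfold admissibleLists
    split_ifs <;> rfl
  | succ n ih =>
    rw [card_admissibleLists_succ]
    have hcard : ∀ x ∈ S, (S.erase x).card = n := fun x hx => by
      rw [Finset.card_erase_of_mem hx, hS, Nat.add_sub_cancel]
    have herase : ∀ {x y : ℕ}, y ∉ S → y ∉ S.erase x := fun h h' => h (Finset.mem_of_mem_erase h')
    have hne : ∀ {x y : ℕ}, x ∈ S → y ∉ S → y ≠ x := fun hx hy h => hy (h ▸ hx)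
    split_ifs with hpc
    · simp only [admissibleCount]
      rw [← hS, ← sum_belowCard]
      refine Finset.sum_congr rfl fun x hx => ?_
      have hmx := hne hx hm
      have hcx := hne hx hc
      simp only [belowCard_le_iff hx]
      split_ifs with h1 h2 h3 h4 h5
      · rw [ih (hcard x hx) (hmc.trans h2) (herase hp) (herase hm) (Finset.notMem_erase x S),
          if_pos (hpc.trans h2), belowCard_erase_of_le (hmc.trans h2), belowCard_erase_of_le le_rfl]
      · omega
      · omega
      · omega
      · rw [ih (hcard x hx) le_rfl (herase hm) (Finset.notMem_erase x S) (Finset.notMem_erase x S),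
          if_pos h5, belowCard_erase_of_le le_rfl]
      · rw [ih (hcard x hx) le_rfl (herase hm) (Finset.notMem_erase x S) (Finset.notMem_erase x S),
          if_neg h5, belowCard_erase_of_le le_rfl, belowCard_erase_of_lt hx (not_le.1 h5)]
    · simp only [admissibleCount]
      rw [← hS, ← sum_belowCard]
      refine Finset.sum_congr rfl fun x hx => ?_
      have hcx := hne hx hc
      simp only [belowCard_le_iff hx]
      split_ifs with h1 h2 h3 h4
      · rw [ih (hcard x hx) (hmc.trans h2) (herase hp) (herase hm) (Finset.notMem_erase x S),
          if_pos h3, belowCard_erase_of_le (hmc.trans h2), belowCard_erase_of_le le_rfl]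
      · rw [ih (hcard x hx) (hmc.trans h2) (herase hp) (herase hm) (Finset.notMem_erase x S),
          if_neg h3, belowCard_erase_of_le (hmc.trans h2), belowCard_erase_of_le le_rfl,
          belowCard_erase_of_lt hx (not_le.1 h3)]
      · omega
      · omega
      · omega
      · rfl

theorem popCount_eq (n : ℕ) : popCount n = (admissibleCount n).1 0 n := by
  have h0 : belowCard (Finset.Icc 1 n) 0 = 0 := by simp [belowCard]
  have hn : belowCard (Finset.Icc 1 n) (n + 1) = n := by
    rw [belowCard, Finset.filter_true_of_mem, Nat.card_Icc, Nat.add_sub_cancel]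
    intro x hx
    rw [Finset.mem_Icc] at hx
    omega
  rw [popCount_eq_card, card_admissibleLists (by simp) (Nat.zero_le _) (by simp) (by simp)
    (by simp), if_pos (Nat.zero_le _), h0, hn]

/-- the number of pop-stacked permutations of lengths 1 through 10. -/
theorem statement9 :
    popCount 1 = 1 ∧ popCount 2 = 1 ∧ popCount 3 = 3 ∧ popCount 4 = 11 ∧
    popCount 5 = 49 ∧ popCount 6 = 263 ∧ popCount 7 = 1653 ∧ popCount 8 = 11877 ∧
    popCount 9 = 95991 ∧ popCount 10 = 862047 := by
  simp only [popCount_eq]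
  decide +kernel
end

section
/- Let f_{c,d}(n,k) be the number of overlapping ballots of [n] with exactly k blocks whose last block has minimum c and maximum d. Then f_{c,d}(n,k) = [c=1 ∧ d=n ∧ k=1] + [c=d]·∑_{a=1}^{c−1}∑_{b=c}^{n} f_{a,b}(n−1, k−1) + [c<d]·∑_{ℓ=0}^{d−c−1} C(d−c−1,ℓ) ∑_{a=1}^{d−ℓ−2} ∑_{b=c}^{n−ℓ−2} f_{a,b}(n−ℓ−2, k−1), and the number of pop-stacked permutations of [n] with exactly k ascending runs is f(n,k) = ∑_{1≤a≤b≤n} f_{a,b}(n,k). -/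
theorem le_bmax {B : Finset ℕ} {x : ℕ} (hx : x ∈ B) : x ≤ bmax B :=
  Finset.le_sup (f := id) hx

theorem bmin_le {B : Finset ℕ} {x : ℕ} (hx : x ∈ B) : bmin B ≤ x :=
  Nat.sInf_le (Finset.mem_coe.2 hx)

theorem bmin_mem {B : Finset ℕ} (hB : B.Nonempty) : bmin B ∈ B :=
  Finset.mem_coe.1 (Nat.sInf_mem (Finset.coe_nonempty.2 hB))

theorem bmax_mem {B : Finset ℕ} (hB : B.Nonempty) : bmax B ∈ B := by
  obtain ⟨x, hx, h⟩ := Finset.exists_mem_eq_sup B hB id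
  rw [bmax, h]
  exact hx

theorem bmin_eq_iff {B : Finset ℕ} (hB : B.Nonempty) {c : ℕ} :
    bmin B = c ↔ c ∈ B ∧ ∀ x ∈ B, c ≤ x := by
  constructor
  · rintro rfl
    exact ⟨bmin_mem hB, fun x hx => bmin_le hx⟩
  · rintro ⟨hc, h⟩
    exact le_antisymm (bmin_le hc) (h _ (bmin_mem hB))

theorem bmax_eq_iff {B : Finset ℕ} (hB : B.Nonempty) {c : ℕ} :
    bmax B = c ↔ c ∈ B ∧ ∀ x ∈ B, x ≤ c := by
  constructor
  · rintro rfl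
    exact ⟨bmax_mem hB, fun x hx => le_bmax hx⟩
  · rintro ⟨hc, h⟩
    exact le_antisymm (h _ (bmax_mem hB)) (le_bmax hc)

theorem bmin_image {e : ℕ → ℕ} (he : StrictMono e) {B : Finset ℕ} (hB : B.Nonempty) :
    bmin (B.image e) = e (bmin B) := by
  rw [bmin_eq_iff (hB.image e)]
  refine ⟨Finset.mem_image_of_mem e (bmin_mem hB), ?_⟩
  simp only [Finset.mem_image, forall_exists_index, and_imp, forall_apply_eq_imp_iff₂]
  exact fun x hx => he.monotone (bmin_le hx)

theorem bmax_image {e : ℕ → ℕ} (he : StrictMono e) {B : Finset ℕ} (hB : B.Nonempty) :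
    bmax (B.image e) = e (bmax B) := by
  rw [bmax_eq_iff (hB.image e)]
  refine ⟨Finset.mem_image_of_mem e (bmax_mem hB), ?_⟩
  simp only [Finset.mem_image, forall_exists_index, and_imp, forall_apply_eq_imp_iff₂]
  exact fun x hx => he.monotone (le_bmax hx)

theorem mem_foldr_union {l : List (Finset ℕ)} {x : ℕ} :
    x ∈ l.foldr (· ∪ ·) ∅ ↔ ∃ B ∈ l, x ∈ B := by
  induction l with
  | nil => simp
  | cons B l ih => simp [ih]

theorem foldr_union_eq_iff {l : List (Finset ℕ)} {U : Finset ℕ} :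
    l.foldr (· ∪ ·) ∅ = U ↔ ∀ x, x ∈ U ↔ ∃ B ∈ l, x ∈ B := by
  simp only [Finset.ext_iff, mem_foldr_union]
  exact ⟨fun h x => (h x).symm, fun h x => (h x).symm⟩

theorem IsBallot.subset {U : Finset ℕ} {l : List (Finset ℕ)} (h : IsBallot U l)
    {B : Finset ℕ} (hB : B ∈ l) : B ⊆ U :=
  fun x hx => ((foldr_union_eq_iff.1 h.2.2) x).2 ⟨B, hB, hx⟩

/-- The overlapping ballots of `U` with `k` blocks whose last block satisfies `P`. -/
def ballotsLast (U : Finset ℕ) (k : ℕ) (P : Finset ℕ → Prop) : Set (List (Finset ℕ)) :=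
  {l | IsBallot U l ∧ Overlapping l ∧ l.length = k ∧ ∃ B, l.getLast? = some B ∧ P B}

theorem fcdk_eq_ncard (c d n k : ℕ) :
    fcdk c d n k =
      (ballotsLast (Finset.Icc 1 n) k fun B => bmin B = c ∧ bmax B = d).ncard := rfl

theorem finite_ballotsLast (U : Finset ℕ) (k : ℕ) (P : Finset ℕ → Prop) :
    (ballotsLast U k P).Finite := by
  refine ((List.finite_length_eq U.powerset k).image (List.map Subtype.val)).subset ?_
  rintro l ⟨hl, -, hk, -⟩
  refine ⟨l.attach.map fun B => ⟨B.1, Finset.mem_powerset.2 (hl.subset B.2)⟩, ?_, ?_⟩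
  · simpa using hk
  · simp

theorem ballotsLast_congr {U : Finset ℕ} {k : ℕ} {P Q : Finset ℕ → Prop}
    (h : ∀ B, B.Nonempty → B ⊆ U → (P B ↔ Q B)) :
    ballotsLast U k P = ballotsLast U k Q := by
  ext l
  refine and_congr_right fun hl => and_congr_right fun _ => and_congr_right fun _ =>
    exists_congr fun B => and_congr_right fun hB => ?_
  have hm := List.mem_of_getLast? hB
  exact h B (hl.1 B hm) (hl.subset hm)

theorem ballotsLast_zero (U : Finset ℕ) (P : Finset ℕ → Prop) :
    ballotsLast U 0 P = ∅ := by
  ext l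
  simp only [ballotsLast, Set.mem_ofPred_eq, Set.mem_empty_iff_false, iff_false]
  rintro ⟨-, -, h, B, hB, -⟩
  rw [List.length_eq_zero_iff] at h
  simp [h] at hB

theorem fcdk_zero (c d n : ℕ) : fcdk c d n 0 = 0 := by
  rw [fcdk_eq_ncard, ballotsLast_zero, Set.ncard_empty]

theorem Set.ncard_eq_sum_fiber {α β : Type*} [DecidableEq β] {s : Set α} (hs : s.Finite)
    (f : α → β) (t : Finset β) (h : ∀ a ∈ s, f a ∈ t) :
    s.ncard = ∑ b ∈ t, {a ∈ s | f a = b}.ncard := by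
  classical
  rw [Set.ncard_eq_toFinset_card s hs,
    Finset.card_eq_sum_card_fiberwise (f := f) (t := t)
      (fun a ha => h a (hs.mem_toFinset.1 ha))]
  refine Finset.sum_congr rfl fun b _ => ?_
  rw [← Set.ncard_coe_finset]
  congr 1
  ext a
  simp

theorem ncard_ballotsLast_mem (U : Finset ℕ) (k : ℕ) (I J : Finset ℕ) :
    (ballotsLast U k fun B => bmin B ∈ I ∧ bmax B ∈ J).ncard =
      ∑ a ∈ I, ∑ b ∈ J, (ballotsLast U k fun B => bmin B = a ∧ bmax B = b).ncard := by
  rw [← Finset.sum_product' I J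
    fun a b => (ballotsLast U k fun B => bmin B = a ∧ bmax B = b).ncard]
  rw [Set.ncard_eq_sum_fiber (finite_ballotsLast _ _ _)
    (fun l => (bmin (l.getLast?.getD ∅), bmax (l.getLast?.getD ∅))) (I ×ˢ J)]
  · refine Finset.sum_congr rfl fun p hp => ?_
    congr 1
    ext l
    rw [Finset.mem_product] at hp
    constructor
    · rintro ⟨⟨hl, ho, hk, B, hB, -⟩, h⟩
      refine ⟨hl, ho, hk, B, hB, ?_⟩
      simpa [hB, Prod.ext_iff] using h
    · rintro ⟨hl, ho, hk, B, hB, h⟩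
      refine ⟨⟨hl, ho, hk, B, hB, ?_⟩, ?_⟩
      · simpa only [h.1, h.2] using hp
      · simpa [hB, Prod.ext_iff] using h
  · rintro l ⟨-, -, -, B, hB, h⟩
    simpa [hB] using h

theorem overlapping_iff {l : List (Finset ℕ)} :
    Overlapping l ↔ l.IsChain fun B C => bmin C < bmax B ∧ bmin B < bmax C := Iff.rfl

theorem isBallot_concat {U B : Finset ℕ} {l : List (Finset ℕ)} :
    IsBallot U (l ++ [B]) ↔ B.Nonempty ∧ B ⊆ U ∧ IsBallot (U \ B) l := by
  simp only [IsBallot, foldr_union_eq_iff, List.pairwise_append, List.mem_append,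
    List.mem_singleton, Finset.mem_sdiff]
  constructor
  · rintro ⟨h1, ⟨h2, -, h3⟩, h4⟩
    refine ⟨h1 B (Or.inr rfl), fun x hx => (h4 x).2 ⟨B, Or.inr rfl, hx⟩,
      fun A hA => h1 A (Or.inl hA), h2, fun x => ⟨?_, ?_⟩⟩
    · rintro ⟨hx, hB⟩
      obtain ⟨A, hA | rfl, hxA⟩ := (h4 x).1 hx
      · exact ⟨A, hA, hxA⟩
      · exact absurd hxA hB
    · rintro ⟨A, hA, hxA⟩
      exact ⟨(h4 x).2 ⟨A, Or.inl hA, hxA⟩, Finset.disjoint_left.1 (h3 A hA B rfl) hxA⟩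
  · rintro ⟨h1, h2, h3, h4, h5⟩
    refine ⟨?_, ⟨h4, List.pairwise_singleton _ _, ?_⟩, fun x => ⟨?_, ?_⟩⟩
    · rintro A (hA | rfl)
      exacts [h3 A hA, h1]
    · rintro A hA _ rfl
      exact Finset.disjoint_left.2 fun x hx => ((h5 x).2 ⟨A, hA, hx⟩).2
    · intro hx
      by_cases hB : x ∈ B
      · exact ⟨B, Or.inr rfl, hB⟩
      · obtain ⟨A, hA, hxA⟩ := (h5 x).1 ⟨hx, hB⟩
        exact ⟨A, Or.inl hA, hxA⟩
    · rintro ⟨A, hA | rfl, hxA⟩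
      · exact ((h5 x).2 ⟨A, hA, hxA⟩).1
      · exact h2 hxA

theorem concat_mem_ballotsLast {U B : Finset ℕ} {l : List (Finset ℕ)} {k : ℕ} (hk : 1 ≤ k)
    {P : Finset ℕ → Prop} :
    l ++ [B] ∈ ballotsLast U (k + 1) P ↔ B.Nonempty ∧ B ⊆ U ∧ P B ∧
      l ∈ ballotsLast (U \ B) k fun A => bmin B < bmax A ∧ bmin A < bmax B := by
  simp only [ballotsLast, Set.mem_ofPred_eq, isBallot_concat, overlapping_iff,
    List.isChain_append, List.getLast?_concat, List.length_append, List.length_singleton,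
    Option.some.injEq, Nat.add_right_cancel_iff]
  constructor
  · rintro ⟨⟨h1, h2, h3⟩, ⟨h4, -, h5⟩, rfl, _, rfl, h6⟩
    refine ⟨h1, h2, h6, h3, h4, rfl, ?_⟩
    obtain ⟨A, hA⟩ : ∃ A, l.getLast? = some A := by
      rw [← Option.isSome_iff_exists, List.getLast?_isSome]
      rintro rfl
      simp at hk
    exact ⟨A, hA, h5 A hA B rfl⟩
  · rintro ⟨h1, h2, h6, h3, h4, rfl, A, hA, h5⟩
    refine ⟨⟨h1, h2, h3⟩, ⟨h4, List.isChain_singleton _, ?_⟩, rfl, B, rfl, h6⟩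
    intro A' hA' B' hB'
    simp only [List.head?_cons, Option.mem_def, Option.some.injEq] at hB' hA'
    rw [hA, Option.some.injEq] at hA'
    subst hA' hB'
    exact h5

theorem ncard_ballotsLast_succ (U : Finset ℕ) {k : ℕ} (hk : 1 ≤ k) (P : Finset ℕ → Prop)
    [DecidablePred P] :
    (ballotsLast U (k + 1) P).ncard =
      ∑ B ∈ U.powerset with B.Nonempty ∧ P B,
        (ballotsLast (U \ B) k fun A => bmin B < bmax A ∧ bmin A < bmax B).ncard := by
  rw [Set.ncard_eq_sum_fiber (finite_ballotsLast _ _ _) (fun l => l.getLast?.getD ∅)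
    {B ∈ U.powerset | B.Nonempty ∧ P B}]
  · refine Finset.sum_congr rfl fun B hB => ?_
    simp only [Finset.mem_filter, Finset.mem_powerset] at hB
    symm
    refine Set.BijOn.ncard_eq (f := fun l => l ++ [B]) ⟨?_, ?_, ?_⟩
    · intro l hl
      refine ⟨(concat_mem_ballotsLast hk).2 ⟨hB.2.1, hB.1, hB.2.2, hl⟩, by simp⟩
    · intro l _ l' _ h
      simpa using h
    · rintro l ⟨hl, hlB⟩
      rcases List.eq_nil_or_concat' l with rfl | ⟨l', A, rfl⟩
      · simp [ballotsLast] at hl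
      · simp only [List.getLast?_concat, Option.getD_some] at hlB
        subst hlB
        exact ⟨l', ((concat_mem_ballotsLast hk).1 hl).2.2.2, rfl⟩
  · rintro l ⟨hl, -, -, B, hB, h⟩
    have hm := List.mem_of_getLast? hB
    simpa [hB, h] using ⟨hl.subset hm, hl.1 B hm⟩

theorem ncard_ballotsLast_one {U : Finset ℕ} (hU : U.Nonempty) (P : Finset ℕ → Prop)
    [Decidable (P U)] :
    (ballotsLast U 1 P).ncard = if P U then 1 else 0 := by
  have key : ∀ l, l ∈ ballotsLast U 1 P ↔ l = [U] ∧ P U := by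
    intro l
    constructor
    · rintro ⟨hl, -, hk, B, hB, h⟩
      obtain ⟨A, rfl⟩ := List.length_eq_one_iff.1 hk
      have := hl.2.2
      simp only [List.foldr_cons, List.foldr_nil, Finset.union_empty] at this
      simp only [List.getLast?_singleton, Option.some.injEq] at hB
      subst this hB
      exact ⟨rfl, h⟩
    · rintro ⟨rfl, h⟩
      exact ⟨⟨by simpa using hU, by simp, by simp⟩, List.isChain_singleton _, rfl, U, rfl, h⟩
  split_ifs with h
  · rw [Set.ncard_eq_one]
    exact ⟨[U], Set.ext fun l => by simp [key, h]⟩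
  · rw [Set.ncard_eq_zero (finite_ballotsLast _ _ _)]
    exact Set.ext fun l => by simp [key, h]

theorem map_image_mem_ballotsLast {e : ℕ → ℕ} (he : StrictMono e) {U : Finset ℕ} {k : ℕ}
    {P : Finset ℕ → Prop} {l : List (Finset ℕ)} :
    l.map (Finset.image e) ∈ ballotsLast (U.image e) k P ↔
      l ∈ ballotsLast U k fun B => P (B.image e) := by
  have hunion : ∀ l : List (Finset ℕ), (l.map (Finset.image e)).foldr (· ∪ ·) ∅ =
      (l.foldr (· ∪ ·) ∅).image e := by
    intro l
    induction l with
    | nil => simp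
    | cons B l ih => simp [ih, Finset.image_union]
  have hb : IsBallot (U.image e) (l.map (Finset.image e)) ↔ IsBallot U l := by
    simp only [IsBallot, hunion, (Finset.image_injective he.injective).eq_iff, List.pairwise_map,
      Finset.disjoint_image he.injective, List.forall_mem_map, Finset.image_nonempty]
  unfold ballotsLast
  simp only [Set.mem_ofPred_eq, hb, List.length_map, List.getLast?_map, Option.map_eq_some_iff]
  refine and_congr_right fun hl => and_congr ?_ (and_congr_right fun _ => ?_)
  · rw [overlapping_iff, overlapping_iff, List.isChain_map]
    refine List.IsChain.iff_of_mem_imp fun {B C} hB hC => ?_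
    have hB' := hl.1 B hB
    have hC' := hl.1 C hC
    simp only [bmin_image he, bmax_image he, hB', hC', he.lt_iff_lt]
  · constructor
    · rintro ⟨_, ⟨B, hB, rfl⟩, h⟩
      exact ⟨B, hB, h⟩
    · rintro ⟨B, hB, h⟩
      exact ⟨_, ⟨B, hB, rfl⟩, h⟩

theorem ncard_ballotsLast_image {e : ℕ → ℕ} (he : StrictMono e) (U : Finset ℕ) (k : ℕ)
    (P : Finset ℕ → Prop) :
    (ballotsLast (U.image e) k P).ncard =
      (ballotsLast U k fun B => P (B.image e)).ncard := by
  symm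
  refine Set.BijOn.ncard_eq (f := List.map (Finset.image e)) ⟨?_, ?_, ?_⟩
  · exact fun l hl => (map_image_mem_ballotsLast he).2 hl
  · exact (List.map_injective_iff.2 (Finset.image_injective he.injective)).injOn
  · intro l hl
    have h : l ∈ Set.range (List.map (Finset.image e)) := by
      rw [Set.range_list_map]
      intro B hB
      obtain ⟨A, -, hA⟩ := Finset.subset_image_iff.1 (hl.1.subset hB)
      exact ⟨A, hA⟩
    obtain ⟨l', rfl⟩ := h
    exact ⟨l', (map_image_mem_ballotsLast he).1 hl, rfl⟩

theorem count_notMem (B : Finset ℕ) (m : ℕ) :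
    Nat.count (· ∉ B) m = m - {x ∈ B | x < m}.card := by
  rw [Nat.count_eq_card_filter_range]
  have h : {x ∈ Finset.range m | x ∉ B} = Finset.range m \ {x ∈ B | x < m} := by
    ext x
    simp only [Finset.mem_filter, Finset.mem_sdiff, Finset.mem_range]
    tauto
  rw [h, Finset.card_sdiff_of_subset, Finset.card_range]
  intro x hx
  simpa using (Finset.mem_filter.1 hx).2

theorem infinite_notMem (B : Finset ℕ) : (Set.ofPred (· ∉ B)).Infinite :=
  B.finite_toSet.infinite_compl

theorem image_nth_notMem {n : ℕ} {B : Finset ℕ} (hB : B ⊆ Finset.Icc 1 n) :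
    (Finset.Icc 1 (n - B.card)).image (Nat.nth (· ∉ B)) = Finset.Icc 1 n \ B := by
  have hinf := infinite_notMem B
  have h0 : (0 : ℕ) ∉ B := fun h => by simpa using hB h
  have he0 : Nat.nth (· ∉ B) 0 = 0 := by simpa using Nat.nth_count (p := (· ∉ B)) h0
  have he := Nat.nth_strictMono hinf
  have hcard : B.card ≤ n := by simpa using Finset.card_le_card hB
  have hcount : Nat.count (· ∉ B) (n + 1) = n + 1 - B.card := by
    rw [count_notMem, Finset.filter_true_of_mem]
    intro x hx
    have := Finset.mem_Icc.1 (hB hx)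
    omega
  ext x
  simp only [Finset.mem_image, Finset.mem_Icc, Finset.mem_sdiff]
  constructor
  · rintro ⟨y, hy, rfl⟩
    have h1 := he (show 0 < y by omega)
    have h2 := (Nat.lt_nth_iff_count_lt hinf (a := y) (b := n + 1)).1 (by omega)
    exact ⟨by omega, Nat.nth_mem_of_infinite hinf y⟩
  · rintro ⟨hx, hxB⟩
    have hxe := Nat.nth_count (p := (· ∉ B)) hxB
    refine ⟨_, ⟨?_, ?_⟩, hxe⟩
    · rw [Nat.one_le_iff_ne_zero]
      intro h
      rw [h, he0] at hxe
      omega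
    · have := Nat.count_strict_mono (p := (· ∉ B)) hxB (show x < n + 1 by omega)
      omega

theorem ncard_ballotsLast_sdiff {n k N : ℕ} {B : Finset ℕ} (hB : B ⊆ Finset.Icc 1 n)
    (hne : B.Nonempty) (hN : n - B.card ≤ N) :
    (ballotsLast (Finset.Icc 1 n \ B) k fun A => bmin B < bmax A ∧ bmin A < bmax B).ncard =
      ∑ a ∈ Finset.Icc 1 (bmax B - B.card), ∑ b ∈ Finset.Icc (bmin B) N,
        fcdk a b (n - B.card) k := by
  have hinf := infinite_notMem B
  have he := Nat.nth_strictMono hinf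
  simp only [fcdk_eq_ncard]
  rw [← ncard_ballotsLast_mem, ← image_nth_notMem hB, ncard_ballotsLast_image he]
  congr 1
  refine ballotsLast_congr fun A hA hAU => ?_
  have hmin := Finset.mem_Icc.1 (hAU (bmin_mem hA))
  have hmax := Finset.mem_Icc.1 (hAU (bmax_mem hA))
  have hcount_min : Nat.count (· ∉ B) (bmin B) = bmin B := by
    rw [count_notMem, Finset.filter_false_of_mem]
    · simp
    · exact fun x hx => not_lt.2 (bmin_le hx)
  have hcard : B.card ≤ bmax B := by
    have h : B ⊆ Finset.Icc 1 (bmax B) := fun x hx =>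
      Finset.mem_Icc.2 ⟨(Finset.mem_Icc.1 (hB hx)).1, le_bmax hx⟩
    simpa using Finset.card_le_card h
  have hcount_max : Nat.count (· ∉ B) (bmax B) = bmax B - (B.card - 1) := by
    rw [count_notMem, ← Finset.card_erase_of_mem (bmax_mem hne)]
    congr 2
    ext x
    simp only [Finset.mem_filter, Finset.mem_erase]
    exact ⟨fun h => ⟨h.2.ne, h.1⟩, fun h => ⟨h.2, lt_of_le_of_ne (le_bmax h.2) h.1⟩⟩
  rw [bmax_image he hA, bmin_image he hA, ← Nat.lt_nth_iff_count_lt hinf, hcount_max]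
  have hne' : Nat.nth (· ∉ B) (bmax A) ≠ bmin B := fun h =>
    Nat.nth_mem_of_infinite hinf (bmax A) (h ▸ bmin_mem hne)
  have hle := Nat.count_le_iff_le_nth hinf (a := bmin B) (b := bmax A)
  rw [hcount_min] at hle
  have hpos := hne.card_pos
  simp only [Finset.mem_Icc]
  constructor
  · rintro ⟨h1, h2⟩
    have := hle.2 h1.le
    omega
  · rintro ⟨h1, h2⟩
    have := hle.1 h2.1
    omega

theorem sum_min_max_eq_sum_powerset_Ioo {n c d : ℕ} (h1 : 1 ≤ c) (h2 : c < d) (h3 : d ≤ n)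
    (g : Finset ℕ → ℕ) [DecidablePred fun B : Finset ℕ => B.Nonempty ∧ bmin B = c ∧ bmax B = d] :
    ∑ B ∈ (Finset.Icc 1 n).powerset with B.Nonempty ∧ bmin B = c ∧ bmax B = d, g B =
      ∑ C ∈ (Finset.Ioo c d).powerset, g (insert c (insert d C)) := by
  symm
  have hnot : ∀ C ∈ (Finset.Ioo c d).powerset, c ∉ C ∧ d ∉ C := by
    intro C hC
    rw [Finset.mem_powerset] at hC
    exact ⟨fun h => by simpa using hC h, fun h => by simpa using hC h⟩
  refine Finset.sum_bij (fun C _ => insert c (insert d C)) ?_ ?_ ?_ (fun _ _ => rfl)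
  · intro C hC
    rw [Finset.mem_powerset] at hC
    have hne : (insert c (insert d C)).Nonempty := Finset.insert_nonempty _ _
    simp only [Finset.mem_filter, Finset.mem_powerset, bmin_eq_iff hne, bmax_eq_iff hne]
    have hC' : ∀ x ∈ C, c < x ∧ x < d := fun x hx => Finset.mem_Ioo.1 (hC hx)
    refine ⟨?_, hne, ⟨by simp, ?_⟩, by simp, ?_⟩
    · intro x hx
      simp only [Finset.mem_insert, Finset.mem_Icc] at hx ⊢
      rcases hx with rfl | rfl | hx
      · omega
      · omega
      · have := hC' x hx
        omega
    · intro x hx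
      simp only [Finset.mem_insert] at hx
      rcases hx with rfl | rfl | hx
      · omega
      · omega
      · have := hC' x hx
        omega
    · intro x hx
      simp only [Finset.mem_insert] at hx
      rcases hx with rfl | rfl | hx
      · omega
      · omega
      · have := hC' x hx
        omega
  · intro C hC C' hC' h
    have a := hnot C hC
    have b := hnot C' hC'
    ext x
    have := Finset.ext_iff.1 h x
    simp only [Finset.mem_insert] at this
    by_cases hc : x = c
    · subst hc; tauto
    by_cases hd : x = d
    · subst hd; tauto
    tauto
  · intro B hB
    simp only [Finset.mem_filter, Finset.mem_powerset] at hB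
    obtain ⟨-, hne, hc, hd⟩ := hB
    rw [bmin_eq_iff hne] at hc
    rw [bmax_eq_iff hne] at hd
    refine ⟨B.filter fun x => x ≠ c ∧ x ≠ d, ?_, ?_⟩
    · rw [Finset.mem_powerset]
      intro x hx
      rw [Finset.mem_filter] at hx
      rw [Finset.mem_Ioo]
      have := hc.2 x hx.1
      have := hd.2 x hx.1
      omega
    · ext x
      simp only [Finset.mem_insert, Finset.mem_filter]
      have := hc.1
      have := hd.1
      constructor
      · rintro (rfl | rfl | h)
        exacts [hc.1, hd.1, h.1]
      · tauto

theorem fcdk_one {n c d : ℕ} (hn : 1 ≤ n) :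
    fcdk c d n 1 = if c = 1 ∧ d = n then 1 else 0 := by
  have hU : (Finset.Icc 1 n).Nonempty := ⟨1, by simpa⟩
  have hmin : bmin (Finset.Icc 1 n) = 1 := by
    rw [bmin_eq_iff hU]
    exact ⟨by simpa, fun x hx => (Finset.mem_Icc.1 hx).1⟩
  have hmax : bmax (Finset.Icc 1 n) = n := by
    rw [bmax_eq_iff hU]
    exact ⟨by simpa, fun x hx => (Finset.mem_Icc.1 hx).2⟩
  rw [fcdk_eq_ncard, ncard_ballotsLast_one hU, hmin, hmax]
  simp only [eq_comm (a := 1), eq_comm (a := n)]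

theorem fcdk_self_succ {n c k : ℕ} (h1 : 1 ≤ c) (h3 : c ≤ n) (hk : 1 ≤ k) :
    fcdk c c n (k + 1) =
      ∑ a ∈ Finset.Icc 1 (c - 1), ∑ b ∈ Finset.Icc c n, fcdk a b (n - 1) k := by
  rw [fcdk_eq_ncard, ncard_ballotsLast_succ _ hk]
  have hsingle : {B ∈ (Finset.Icc 1 n).powerset | B.Nonempty ∧ bmin B = c ∧ bmax B = c} =
      {{c}} := by
    ext B
    simp only [Finset.mem_filter, Finset.mem_powerset, Finset.mem_singleton]
    constructor
    · rintro ⟨-, hne, hc, hd⟩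
      rw [bmin_eq_iff hne] at hc
      rw [bmax_eq_iff hne] at hd
      refine Finset.eq_singleton_iff_unique_mem.2 ⟨hc.1, fun x hx => ?_⟩
      exact le_antisymm (hd.2 x hx) (hc.2 x hx)
    · rintro rfl
      have hne := Finset.singleton_nonempty c
      rw [bmin_eq_iff hne, bmax_eq_iff hne]
      simp [h1, h3]
  have hne := Finset.singleton_nonempty c
  have hmin : bmin {c} = c := by simp [bmin_eq_iff hne]
  have hmax : bmax {c} = c := by simp [bmax_eq_iff hne]
  rw [hsingle, Finset.sum_singleton,
    ncard_ballotsLast_sdiff (N := n) (by simp [h1, h3]) hne (Nat.sub_le _ _),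
    hmin, hmax, Finset.card_singleton]

theorem fcdk_succ_of_lt {n c d k : ℕ} (h1 : 1 ≤ c) (h2 : c < d) (h3 : d ≤ n) (hk : 1 ≤ k) :
    fcdk c d n (k + 1) =
      ∑ ℓ ∈ Finset.range (d - c), Nat.choose (d - c - 1) ℓ *
        ∑ a ∈ Finset.Icc 1 (d - ℓ - 2), ∑ b ∈ Finset.Icc c (n - ℓ - 2),
          fcdk a b (n - ℓ - 2) k := by
  have hterm : ∀ B ∈ {B ∈ (Finset.Icc 1 n).powerset | B.Nonempty ∧ bmin B = c ∧ bmax B = d},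
      (ballotsLast (Finset.Icc 1 n \ B) k fun A => bmin B < bmax A ∧ bmin A < bmax B).ncard =
      ∑ a ∈ Finset.Icc 1 (d - B.card), ∑ b ∈ Finset.Icc c (n - B.card),
        fcdk a b (n - B.card) k := by
    intro B hB
    simp only [Finset.mem_filter, Finset.mem_powerset] at hB
    rw [ncard_ballotsLast_sdiff hB.1 hB.2.1 le_rfl, hB.2.2.1, hB.2.2.2]
  rw [fcdk_eq_ncard, ncard_ballotsLast_succ _ hk, Finset.sum_congr rfl hterm,
    sum_min_max_eq_sum_powerset_Ioo h1 h2 h3]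
  have hcard : ∀ C ∈ (Finset.Ioo c d).powerset, (insert c (insert d C)).card = C.card + 2 := by
    intro C hC
    rw [Finset.mem_powerset] at hC
    have hc : c ∉ C := fun h => by simpa using hC h
    have hd : d ∉ C := fun h => by simpa using hC h
    rw [Finset.card_insert_of_notMem (by simp [hc, h2.ne]), Finset.card_insert_of_notMem hd]
  rw [Finset.sum_congr rfl fun C hC => by rw [hcard C hC],
    Finset.sum_powerset_apply_card fun m => ∑ a ∈ Finset.Icc 1 (d - (m + 2)),
      ∑ b ∈ Finset.Icc c (n - (m + 2)), fcdk a b (n - (m + 2)) k,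
    Nat.card_Ioo, show d - c - 1 + 1 = d - c by omega]
  simp only [smul_eq_mul, Nat.sub_sub]

theorem List.splitBy_cons_eq {α : Type*} (r : α → α → Bool) (a : α) (l : List α) :
    (a :: l).splitBy r =
      match l.splitBy r with
      | (b :: t) :: rs => if r a b then (a :: b :: t) :: rs else [a] :: (b :: t) :: rs
      | _ => [[a]] := by
  obtain ⟨hfl, hne, hch, hbd⟩ := List.splitBy_eq_iff.1 (rfl : l.splitBy r = l.splitBy r)
  generalize l.splitBy r = L at *
  subst hfl
  match L, hne, hch, hbd with
  | [], _, _, _ => rfl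
  | [] :: rs, hne, _, _ => simp at hne
  | (b :: t) :: rs, hne, hch, hbd =>
    simp only
    split_ifs with h
    · refine List.splitBy_eq_iff.2 ⟨by simp, by simpa using hne, ?_, ?_⟩
      · intro m hm
        rcases List.mem_cons.1 hm with rfl | hm
        · exact List.isChain_cons_cons.2 ⟨h, hch _ List.mem_cons_self⟩
        · exact hch m (List.mem_cons_of_mem _ hm)
      · cases rs with
        | nil => exact List.isChain_singleton _
        | cons s rs =>
          rw [List.isChain_cons_cons] at hbd ⊢
          refine ⟨?_, hbd.2⟩
          obtain ⟨ha, hb, h'⟩ := hbd.1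
          exact ⟨by simp, hb, by simpa using h'⟩
    · refine List.splitBy_eq_iff.2 ⟨by simp, by simpa using hne, ?_, ?_⟩
      · intro m hm
        rcases List.mem_cons.1 hm with rfl | hm
        · exact List.isChain_singleton _
        · exact hch m hm
      · exact List.isChain_cons_cons.2 ⟨⟨by simp, by simp, by simpa using h⟩, hbd⟩

theorem ascRuns_eq_splitBy (l : List ℕ) : ascRuns l = l.splitBy fun a b => decide (a < b) := by
  induction l with
  | nil => rfl
  | cons a l ih =>
    rw [List.splitBy_cons_eq, ascRuns, ih]
    simp only [decide_eq_true_eq]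
    rcases l.splitBy _ with _ | ⟨_ | ⟨b, t⟩, rs⟩ <;> rfl

theorem descRuns_eq_splitBy (l : List ℕ) : descRuns l = l.splitBy fun a b => decide (b < a) := by
  induction l with
  | nil => rfl
  | cons a l ih =>
    rw [List.splitBy_cons_eq, descRuns, ih]
    simp only [decide_eq_true_eq]
    rcases l.splitBy _ with _ | ⟨_ | ⟨b, t⟩, rs⟩ <;> rfl

theorem head_eq_bmin {l : List ℕ} (hl : l.Pairwise (· < ·)) (h : l ≠ []) :
    l.head h = bmin l.toFinset := by
  symm
  rw [bmin_eq_iff (List.toFinset_nonempty_iff _ |>.2 h)]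
  cases l with
  | nil => exact absurd rfl h
  | cons a l =>
    simp only [List.head_cons, List.mem_toFinset, List.mem_cons, true_or, true_and]
    rintro x (rfl | hx)
    · exact le_rfl
    · exact ((List.pairwise_cons.1 hl).1 x hx).le

theorem getLast_eq_bmax {l : List ℕ} (hl : l.Pairwise (· < ·)) (h : l ≠ []) :
    l.getLast h = bmax l.toFinset := by
  symm
  rw [bmax_eq_iff (List.toFinset_nonempty_iff _ |>.2 h)]
  rcases List.eq_nil_or_concat' l with rfl | ⟨l, a, rfl⟩
  · exact absurd rfl h
  · simp only [List.getLast_append_singleton, List.mem_toFinset, List.mem_append,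
      List.mem_singleton, or_true, true_and]
    rintro x (hx | rfl)
    · exact ((List.pairwise_append.1 hl).2.2 x hx a (List.mem_singleton_self a)).le
    · exact le_rfl

theorem head_eq_bmax {l : List ℕ} (hl : l.Pairwise (· > ·)) (h : l ≠ []) :
    l.head h = bmax l.toFinset := by
  rw [← List.toFinset_reverse, ← getLast_eq_bmax (List.pairwise_reverse.2 hl) (by simpa using h),
    List.getLast_reverse]

theorem getLast_eq_bmin {l : List ℕ} (hl : l.Pairwise (· > ·)) (h : l ≠ []) :
    l.getLast h = bmin l.toFinset := by
  rw [← List.toFinset_reverse, ← head_eq_bmin (List.pairwise_reverse.2 hl) (by simpa using h),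
    List.head_reverse]

theorem ascRuns_eq_iff {l : List ℕ} {L : List (List ℕ)} :
    ascRuns l = L ↔ l = L.flatten ∧ (∀ A ∈ L, A ≠ [] ∧ A.Pairwise (· < ·)) ∧
      L.IsChain fun A A' => bmin A'.toFinset ≤ bmax A.toFinset := by
  rw [ascRuns_eq_splitBy, List.splitBy_eq_iff]
  refine and_congr_right fun _ => ?_
  have hne : [] ∉ L ↔ ∀ A ∈ L, A ≠ [] :=
    ⟨fun h A hA h' => h (h' ▸ hA), fun h h' => h _ h' rfl⟩
  simp only [decide_eq_true_eq, List.isChain_iff_pairwise (R := fun x y : ℕ => x < y),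
    decide_eq_false_iff_not, not_lt]
  rw [hne, ← and_assoc, ← forall₂_and]
  refine and_congr_right fun h => List.IsChain.iff_of_mem_imp fun {A A'} hA hA' => ?_
  rw [← head_eq_bmin (h A' hA').2 (h A' hA').1, ← getLast_eq_bmax (h A hA).2 (h A hA).1]
  exact ⟨fun ⟨_, _, h⟩ => h, fun h' => ⟨(h A hA).1, (h A' hA').1, h'⟩⟩

theorem descRuns_eq_iff {l : List ℕ} {L : List (List ℕ)} :
    descRuns l = L ↔ l = L.flatten ∧ (∀ A ∈ L, A ≠ [] ∧ A.Pairwise (· > ·)) ∧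
      L.IsChain fun A A' => bmin A.toFinset ≤ bmax A'.toFinset := by
  rw [descRuns_eq_splitBy, List.splitBy_eq_iff]
  refine and_congr_right fun _ => ?_
  have hne : [] ∉ L ↔ ∀ A ∈ L, A ≠ [] :=
    ⟨fun h A hA h' => h (h' ▸ hA), fun h h' => h _ h' rfl⟩
  simp only [decide_eq_true_eq, List.isChain_iff_pairwise (R := fun x y : ℕ => y < x),
    decide_eq_false_iff_not, not_lt]
  rw [hne, ← and_assoc, ← forall₂_and]
  refine and_congr_right fun h => List.IsChain.iff_of_mem_imp fun {A A'} hA hA' => ?_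
  rw [← head_eq_bmax (h A' hA').2 (h A' hA').1, ← getLast_eq_bmin (h A hA).2 (h A hA).1]
  exact ⟨fun ⟨_, _, h⟩ => h, fun h' => ⟨(h A hA).1, (h A' hA').1, h'⟩⟩

theorem flatten_map_reverse_perm (L : List (List ℕ)) :
    (L.map List.reverse).flatten.Perm L.flatten := by
  induction L with
  | nil => simp
  | cons A L ih => simpa using (List.reverse_perm A).append ih

theorem bmin_anti {A B : Finset ℕ} (h : A ⊆ B) (hA : A.Nonempty) : bmin B ≤ bmin A :=
  bmin_le (h (bmin_mem hA))

theorem bmax_mono {A B : Finset ℕ} (h : A ⊆ B) : bmax A ≤ bmax B :=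
  Finset.sup_mono h

theorem isChain_ascRuns_flatten {Ds : List (List ℕ)}
    (hD : ∀ D ∈ Ds, D ≠ [] ∧ D.Pairwise (· < ·))
    (hch : Ds.IsChain fun D D' => bmin D.toFinset ≤ bmax D'.toFinset) :
    (ascRuns Ds.flatten).IsChain (fun A A' => bmin A.toFinset ≤ bmax A'.toFinset) ∧
      ∀ D ∈ Ds.head?, ∃ A ∈ (ascRuns Ds.flatten).head?, D ⊆ A := by
  induction Ds with
  | nil => simp [ascRuns]
  | cons D Ds ih =>
    obtain ⟨hne, hsort⟩ := hD D List.mem_cons_self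
    obtain ⟨ih1, ih2⟩ := ih (fun D' h => hD D' (List.mem_cons_of_mem _ h)) hch.of_cons
    obtain ⟨hfl, hA, hbd⟩ := ascRuns_eq_iff.1 (rfl : ascRuns Ds.flatten = _)
    generalize ascRuns Ds.flatten = L at *
    suffices h : ∃ L', ascRuns (D :: Ds).flatten = L' ∧
        L'.IsChain (fun A A' => bmin A.toFinset ≤ bmax A'.toFinset) ∧
        ∃ A ∈ L'.head?, D ⊆ A by
      obtain ⟨L', rfl, h1, h2⟩ := h
      exact ⟨h1, by simpa using h2⟩
    simp only [ascRuns_eq_iff, List.flatten_cons, hfl]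
    cases L with
    | nil => exact ⟨[D], ⟨by simp, by simp [hne, hsort], by simp⟩, by simp, by simp⟩
    | cons A As =>
      obtain ⟨hAne, hAsort⟩ := hA A List.mem_cons_self
      have hAs : ∀ B ∈ As, B ≠ [] ∧ B.Pairwise (· < ·) :=
        fun B hB => hA B (List.mem_cons_of_mem _ hB)
      have hAf : A.toFinset.Nonempty := (List.toFinset_nonempty_iff _).2 hAne
      by_cases hlt : bmax D.toFinset < bmin A.toFinset
      · refine ⟨(D ++ A) :: As, ⟨by simp, ?_, ?_⟩, ?_, D ++ A, by simp, by simp⟩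
        · rintro B hB
          rcases List.mem_cons.1 hB with rfl | hB
          · refine ⟨by simp [hne], List.pairwise_append.2 ⟨hsort, hAsort, fun x hx y hy => ?_⟩⟩
            exact (le_bmax (List.mem_toFinset.2 hx)).trans_lt
              (hlt.trans_le (bmin_le (List.mem_toFinset.2 hy)))
          · exact hAs B hB
        · cases As with
          | nil => simp
          | cons B Bs =>
            rw [List.isChain_cons_cons] at hbd ⊢
            exact ⟨hbd.1.trans (bmax_mono (by simp)), hbd.2⟩
        · cases As with
          | nil => simp
          | cons B Bs =>
            rw [List.isChain_cons_cons] at ih1 ⊢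
            exact ⟨(bmin_anti (by simp) hAf).trans ih1.1, ih1.2⟩
      · refine ⟨D :: A :: As, ⟨by simp, ?_, ?_⟩, ?_, D, by simp, by simp⟩
        · rintro B hB
          rcases List.mem_cons.1 hB with rfl | hB
          · exact ⟨hne, hsort⟩
          · exact hA B hB
        · exact List.isChain_cons_cons.2 ⟨not_lt.1 hlt, hbd⟩
        · refine List.isChain_cons_cons.2 ⟨?_, ih1⟩
          cases Ds with
          | nil => simp [hAne] at hfl
          | cons D' Ds =>
            rw [List.isChain_cons_cons] at hch
            obtain ⟨A', hA', hsub⟩ := ih2 D' rfl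
            simp only [List.head?_cons, Option.mem_def, Option.some.injEq] at hA'
            subst hA'
            exact hch.1.trans (bmax_mono fun x hx =>
              List.mem_toFinset.2 (hsub (List.mem_toFinset.1 hx)))

theorem isPopStacked_iff_s13 {n : ℕ} {σ : List ℕ} (hσ : IsPermOf n σ) :
    IsPopStacked n σ ↔
      (ascRuns σ).IsChain fun A A' => bmin A.toFinset ≤ bmax A'.toFinset := by
  constructor
  · rintro ⟨π, -, rfl⟩
    obtain ⟨-, hD, hch⟩ := descRuns_eq_iff.1 (rfl : descRuns π = _)
    refine (isChain_ascRuns_flatten ?_ ?_).1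
    · simp only [List.mem_map, forall_exists_index, and_imp, forall_apply_eq_imp_iff₂]
      exact fun D h => ⟨by simpa using (hD D h).1, List.pairwise_reverse.2 (hD D h).2⟩
    · simpa [List.isChain_map] using hch
  · intro h
    obtain ⟨hfl, hA, -⟩ := ascRuns_eq_iff.1 (rfl : ascRuns σ = _)
    refine ⟨((ascRuns σ).map List.reverse).flatten, ?_, ?_⟩
    · refine (flatten_map_reverse_perm _).trans ?_
      rwa [← hfl]
    · have hd : descRuns ((ascRuns σ).map List.reverse).flatten =
          (ascRuns σ).map List.reverse := by
        refine descRuns_eq_iff.2 ⟨rfl, ?_, ?_⟩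
        · simp only [List.mem_map, forall_exists_index, and_imp, forall_apply_eq_imp_iff₂]
          exact fun D h => ⟨by simpa using (hA D h).1, List.pairwise_reverse.2 (hA D h).2⟩
        · simpa [List.isChain_map] using h
      rw [popStack, hd]
      simpa [Function.comp_def] using hfl.symm

theorem mem_of_isPermOf {n : ℕ} {σ : List ℕ} (h : IsPermOf n σ) {x : ℕ} :
    x ∈ σ ↔ x ∈ Finset.Icc 1 n := by
  rw [h.mem_iff, List.mem_range'_1, Finset.mem_Icc]
  omega

theorem nodup_of_isPermOf {n : ℕ} {σ : List ℕ} (h : IsPermOf n σ) : σ.Nodup :=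
  h.nodup_iff.2 List.nodup_range'

theorem isBallot_map_toFinset_ascRuns {n : ℕ} {σ : List ℕ} (hσ : IsPermOf n σ) :
    IsBallot (Finset.Icc 1 n) ((ascRuns σ).map List.toFinset) := by
  obtain ⟨hfl, hA, -⟩ := ascRuns_eq_iff.1 (rfl : ascRuns σ = _)
  have hnd := nodup_of_isPermOf hσ
  rw [hfl, List.nodup_flatten] at hnd
  refine ⟨?_, ?_, foldr_union_eq_iff.2 fun x => ?_⟩
  · simp only [List.mem_map, forall_exists_index, and_imp, forall_apply_eq_imp_iff₂]
    exact fun A h => (List.toFinset_nonempty_iff _).2 (hA A h).1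
  · rw [List.pairwise_map]
    exact hnd.2.imp fun h => List.disjoint_toFinset_iff_disjoint.2 h
  · rw [← mem_of_isPermOf hσ]
    conv_lhs => rw [hfl]
    simp

theorem overlapping_iff_of_disjoint {l : List (Finset ℕ)} (hne : ∀ B ∈ l, B.Nonempty)
    (hd : l.Pairwise Disjoint) :
    Overlapping l ↔ (l.IsChain fun B C => bmin C ≤ bmax B) ∧
      l.IsChain fun B C => bmin B ≤ bmax C := by
  rw [overlapping_iff]
  induction l with
  | nil => simp
  | cons B l ih =>
    cases l with
    | nil => simp
    | cons C l =>
      simp only [List.isChain_cons_cons,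
        ih (fun A hA => hne A (List.mem_cons_of_mem _ hA)) hd.of_cons]
      have hBC : Disjoint B C := (List.pairwise_cons.1 hd).1 C List.mem_cons_self
      have hB := hne B List.mem_cons_self
      have hC := hne C (List.mem_cons_of_mem _ List.mem_cons_self)
      have h1 : bmin C ≠ bmax B := fun h =>
        Finset.disjoint_left.1 hBC (bmax_mem hB) (h ▸ bmin_mem hC)
      have h2 : bmin B ≠ bmax C := fun h =>
        Finset.disjoint_left.1 hBC (bmin_mem hB) (h ▸ bmax_mem hC)
      rw [lt_iff_le_and_ne, lt_iff_le_and_ne]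
      tauto

theorem ascRuns_flatten_map_sort {U : Finset ℕ} {l : List (Finset ℕ)} (hl : IsBallot U l)
    (ho : Overlapping l) :
    ascRuns (l.map fun B => B.sort (· ≤ ·)).flatten = l.map fun B => B.sort (· ≤ ·) := by
  rw [ascRuns_eq_iff]
  refine ⟨rfl, ?_, ?_⟩
  · simp only [List.mem_map, forall_exists_index, and_imp, forall_apply_eq_imp_iff₂]
    refine fun B hB => ⟨?_, ?_⟩
    · rw [← List.toFinset_nonempty_iff, Finset.sort_toFinset]
      exact hl.1 B hB
    · exact (Finset.sortedLT_sort B).pairwise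
  · rw [List.isChain_map]
    simp only [Finset.sort_toFinset]
    exact ((overlapping_iff_of_disjoint hl.1 hl.2.1).1 ho).1

theorem isPermOf_flatten_map_sort {n : ℕ} {l : List (Finset ℕ)}
    (hl : IsBallot (Finset.Icc 1 n) l) :
    IsPermOf n (l.map fun B => B.sort (· ≤ ·)).flatten := by
  have hnd : (l.map fun B => B.sort (· ≤ ·)).flatten.Nodup := by
    rw [List.nodup_flatten, List.pairwise_map]
    refine ⟨?_, hl.2.1.imp fun {B C} h => ?_⟩
    · simp only [List.mem_map, forall_exists_index, and_imp, forall_apply_eq_imp_iff₂]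
      exact fun B _ => B.sort_nodup _
    · rw [← List.disjoint_toFinset_iff_disjoint]
      simpa using h
  refine (List.perm_ext_iff_of_nodup hnd List.nodup_range').2 fun x => ?_
  have h := foldr_union_eq_iff.1 hl.2.2 x
  rw [Finset.mem_Icc] at h
  rw [List.mem_range'_1, show 1 ≤ x ∧ x < 1 + n ↔ 1 ≤ x ∧ x ≤ n by omega, h]
  simp

theorem popCountK_eq_ncard (n k : ℕ) :
    popCountK n k =
      {l | IsBallot (Finset.Icc 1 n) l ∧ Overlapping l ∧ l.length = k}.ncard := by
  change {σ : List ℕ | IsPermOf n σ ∧ IsPopStacked n σ ∧ (ascRuns σ).length = k}.ncard = _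
  refine Set.BijOn.ncard_eq (f := fun σ => (ascRuns σ).map List.toFinset)
    (Set.InvOn.bijOn (f' := fun l => (l.map fun B => B.sort (· ≤ ·)).flatten) ⟨?_, ?_⟩ ?_ ?_)
  · rintro σ ⟨hσ, -, -⟩
    obtain ⟨hfl, hA, -⟩ := ascRuns_eq_iff.1 (rfl : ascRuns σ = _)
    have h : ∀ A ∈ ascRuns σ, A.toFinset.sort (· ≤ ·) = A := fun A h =>
      (List.toFinset_sort (· ≤ ·) ((hA A h).2.imp ne_of_lt)).2 ((hA A h).2.imp le_of_lt)
    simp only [List.map_map, Function.comp_def]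
    rw [List.map_congr_left h]
    simpa using hfl.symm
  · rintro l ⟨hl, ho, -⟩
    simp only [ascRuns_flatten_map_sort hl ho, List.map_map, Function.comp_def,
      Finset.sort_toFinset, List.map_id']
  · rintro σ ⟨hσ, hp, hk⟩
    have hb := isBallot_map_toFinset_ascRuns hσ
    refine ⟨hb, (overlapping_iff_of_disjoint hb.1 hb.2.1).2 ?_, by simpa using hk⟩
    simp only [List.isChain_map]
    exact ⟨(ascRuns_eq_iff.1 (rfl : ascRuns σ = _)).2.2, (isPopStacked_iff_s13 hσ).1 hp⟩
  · rintro l ⟨hl, ho, hk⟩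
    have hσ := isPermOf_flatten_map_sort hl
    refine ⟨hσ, (isPopStacked_iff_s13 hσ).2 ?_, ?_⟩
    · rw [ascRuns_flatten_map_sort hl ho, List.isChain_map]
      simp only [Finset.sort_toFinset]
      exact ((overlapping_iff_of_disjoint hl.1 hl.2.1).1 ho).2
    · rw [ascRuns_flatten_map_sort hl ho, List.length_map, hk]

theorem fcdk_eq_zero_of_lt {a b n k : ℕ} (h : b < a) : fcdk a b n k = 0 := by
  rw [fcdk_eq_ncard, Set.ncard_eq_zero (finite_ballotsLast _ _ _), Set.eq_empty_iff_forall_notMem]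
  rintro l ⟨hl, -, -, B, hB, rfl, rfl⟩
  have hne := hl.1 B (List.mem_of_getLast? hB)
  exact absurd (bmin_le (bmax_mem hne)) (not_le.2 h)

theorem popCountK_eq_sum {n k : ℕ} (hk : 1 ≤ k) :
    popCountK n k = ∑ a ∈ Finset.Icc 1 n, ∑ b ∈ Finset.Icc a n, fcdk a b n k := by
  have h : {l | IsBallot (Finset.Icc 1 n) l ∧ Overlapping l ∧ l.length = k} =
      ballotsLast (Finset.Icc 1 n) k
        fun B => bmin B ∈ Finset.Icc 1 n ∧ bmax B ∈ Finset.Icc 1 n := by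
    ext l
    constructor
    · rintro ⟨hl, ho, hlen⟩
      obtain ⟨B, hB⟩ : ∃ B, l.getLast? = some B := by
        rw [← Option.isSome_iff_exists, List.getLast?_isSome]
        rintro rfl
        simp at hlen
        omega
      have hm := List.mem_of_getLast? hB
      exact ⟨hl, ho, hlen, B, hB, hl.subset hm (bmin_mem (hl.1 B hm)),
        hl.subset hm (bmax_mem (hl.1 B hm))⟩
    · rintro ⟨hl, ho, hlen, -⟩
      exact ⟨hl, ho, hlen⟩
  rw [popCountK_eq_ncard, h, ncard_ballotsLast_mem]
  refine Finset.sum_congr rfl fun a ha => ?_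
  symm
  refine Finset.sum_subset (Finset.Icc_subset_Icc_left (Finset.mem_Icc.1 ha).1) fun b hb hb' => ?_
  refine fcdk_eq_zero_of_lt ?_
  simp only [Finset.mem_Icc] at hb hb'
  omega

/-- the recurrence for `f_{c,d}(n,k)` and the count of pop-stacked
permutations of `[n]` with exactly `k` ascending runs. -/
theorem statement13 (n c d k : ℕ) (h1 : 1 ≤ c) (h2 : c ≤ d) (h3 : d ≤ n) (hk : 1 ≤ k) :
    fcdk c d n k =
      (if c = 1 ∧ d = n ∧ k = 1 then 1 else 0) +
      (if c = d then
        ∑ a ∈ Finset.Icc 1 (c - 1), ∑ b ∈ Finset.Icc c n, fcdk a b (n - 1) (k - 1)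
      else 0) +
      (if c < d then
        ∑ ℓ ∈ Finset.range (d - c), Nat.choose (d - c - 1) ℓ *
          ∑ a ∈ Finset.Icc 1 (d - ℓ - 2), ∑ b ∈ Finset.Icc c (n - ℓ - 2),
            fcdk a b (n - ℓ - 2) (k - 1)
      else 0) ∧
    popCountK n k = ∑ a ∈ Finset.Icc 1 n, ∑ b ∈ Finset.Icc a n, fcdk a b n k := by

  refine ⟨?_, popCountK_eq_sum hk⟩
  obtain ⟨k, rfl⟩ : ∃ j, k = j + 1 := ⟨k - 1, by omega⟩
  rcases Nat.eq_zero_or_pos k with rfl | hpos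
  · simp [fcdk_one (h1.trans (h2.trans h3)), fcdk_zero]
  · rcases h2.eq_or_lt with rfl | hlt
    · simp [fcdk_self_succ h1 h3 hpos, hpos.ne']
    · simp [fcdk_succ_of_lt h1 hlt h3 hpos, hpos.ne', hlt, hlt.ne]
end
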